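/- arXiv:1309.5618 — 2 statements merged into one kernel-verified Lean document; each statement's English description precedes it below -/
import Mathlib

section
/- Let T be a string of length n and 1 ≤ i ≤ j ≤ n. Let p ∈ [i, j] be the position such that T[p..] is the lexicographically minimal element of Suf[i, j]. Then the minimal suffix of T[i..j] is either T[p..j] or the shortest nonempty border of T[p..j]; moreover, in the latter case the length of the minimal suffix of T[i..j] is at most |T[p..j]|/2. -/
/-!
Write `W = T[i..j]`, `P = T[p..j]` and `Z = T[j+1..]`. The elements of `Suf[i, j]` are exactly the
strings `t ++ Z` with `t` a nonempty suffix of `W`, so `P ++ Z` is minimal among these.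

Let `s` be the minimal suffix of `W` and suppose `s ≠ P`. Then `s ≺ P`. If `s` were not a prefix of
`P`, the two would differ at some position, and appending `Z` would give `s ++ Z ≺ P ++ Z`,
contradicting the choice of `p` (`lex_prefix_or_append`). Hence `s` is a proper prefix of `P`, and
being a shorter suffix of `W` it is a suffix of `P`: it is a border. A shorter nonempty border of `P`
would be a proper prefix of `s` and a suffix of `W`, hence a smaller suffix of `W`. Finally, if
`2|s| > |P|`, the two occurrences of `s` in `P` overlap and the overlap is a shorter nonempty
border of `P` (`exists_shorter_border`).
-/

variable {α : Type*} [LinearOrder α]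

/-- `substr T i j` is the 1-indexed substring `T[i..j]` (inclusive). -/
def substr (T : List α) (i j : ℕ) : List α := (T.drop (i - 1)).take (j - i + 1)

/-- `sufFrom T i` is the 1-indexed suffix `T[i..]`. -/
def sufFrom (T : List α) (i : ℕ) : List α := T.drop (i - 1)

/-- `s` is the lexicographically minimal nonempty suffix of `w`. -/
def IsMinSuffix (w s : List α) : Prop :=
  s ≠ [] ∧ s <:+ w ∧ ∀ t, t ≠ [] → t <:+ w → ¬ List.Lex (· < ·) t s

/-- `s` is a border of `w`: a prefix and a suffix of `w` that differs from `w`. -/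
def IsBorder (w s : List α) : Prop := s <+: w ∧ s <:+ w ∧ s ≠ w

/-- A lexicographic inequality either comes from the prefix relation or from a mismatch, and in the
latter case it persists when the same string is appended to both sides. -/
theorem lex_prefix_or_append {s w : List α} (z : List α) (h : List.Lex (· < ·) s w) :
    s <+: w ∨ List.Lex (· < ·) (s ++ z) (w ++ z) := by
  induction h with
  | nil => exact Or.inl (List.nil_prefix)
  | cons h ih =>
    rcases ih with ih | ih
    · exact Or.inl ((List.prefix_cons_inj _).2 ih)
    · exact Or.inr (List.Lex.cons ih)
  | rel h => exact Or.inr (List.Lex.rel h)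

theorem lex_of_prefix_of_length_lt {t s : List α} (h : t <+: s) (hl : t.length < s.length) :
    List.Lex (· < ·) t s := by
  obtain ⟨r, rfl⟩ := h
  induction t with
  | nil =>
    cases r with
    | nil => simp at hl
    | cons a r => exact List.Lex.nil
  | cons a t ih => exact List.Lex.cons (ih (by simp only [List.length_cons, List.length_append] at hl ⊢; omega))

/-- The overlap of the prefix and suffix occurrences of a border longer than half of `w` is a
shorter nonempty border of `w`. -/
theorem exists_shorter_border {w s : List α} (h : IsBorder w s) (hl : w.length < 2 * s.length) :
    ∃ t, t ≠ [] ∧ IsBorder w t ∧ t.length < s.length := by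
  obtain ⟨hpre, hsuf, hne⟩ := h
  have hlt : s.length < w.length :=
    lt_of_le_of_ne hpre.length_le fun e => hne (hpre.eq_of_length e)
  have hts : s.drop (w.length - s.length) <:+ s := List.drop_suffix _ _
  have htp : s.drop (w.length - s.length) <+: s := by
    have h1 := hpre.drop (w.length - s.length)
    rwa [← List.suffix_iff_eq_drop.1 hsuf] at h1
  have hlen : (s.drop (w.length - s.length)).length < s.length := by
    rw [List.length_drop]; omega
  refine ⟨_, ?_, ⟨htp.trans hpre, hts.trans hsuf, ?_⟩, hlen⟩
  · rw [← List.length_pos_iff, List.length_drop]; omega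
  · intro e
    rw [e] at hlen
    omega

/-- The theorem with positions replaced by suffixes: `P ++ Z` is minimal among the strings `t ++ Z`
with `t` a nonempty suffix of `W`. -/
theorem min_suffix_eq_or_border {W P Z s : List α} (hP : P ≠ []) (hPW : P <:+ W)
    (hmin : ∀ t, t ≠ [] → t <:+ W → ¬ List.Lex (· < ·) (t ++ Z) (P ++ Z))
    (hs : IsMinSuffix W s) :
    s = P ∨
      ((s ≠ [] ∧ IsBorder P s ∧ ∀ t, t ≠ [] → IsBorder P t → s.length ≤ t.length) ∧
        2 * s.length ≤ P.length) := by
  obtain ⟨hs0, hsW, hsmin⟩ := hs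
  by_cases hne : s = P
  · exact Or.inl hne
  right
  have hlex : List.Lex (· < ·) s P := by
    rcases lt_trichotomy s P with h | h | h
    · exact h
    · exact absurd h hne
    · exact absurd h (hsmin P hP hPW)
  have hpre : s <+: P := (lex_prefix_or_append Z hlex).resolve_right (hmin s hs0 hsW)
  have hbord : IsBorder P s := ⟨hpre, List.suffix_of_suffix_length_le hsW hPW hpre.length_le, hne⟩
  have hshort : ∀ t, t ≠ [] → IsBorder P t → s.length ≤ t.length := by
    intro t ht hbt
    by_contra! hlt
    exact hsmin t ht (hbt.2.1.trans hPW)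
      (lex_of_prefix_of_length_lt (List.prefix_of_prefix_length_le hbt.1 hpre hlt.le) hlt)
  refine ⟨⟨hs0, hbord, hshort⟩, ?_⟩
  by_contra! hl
  obtain ⟨t, ht, hbt, hlt⟩ := exists_shorter_border hbord hl
  exact absurd (hshort t ht hbt) (by omega)

theorem length_substr {T : List α} {q j : ℕ} (hq : 1 ≤ q) (hqj : q ≤ j) (hj : j ≤ T.length) :
    (substr T q j).length = j - q + 1 := by
  simp only [substr, List.length_take, List.length_drop]
  omega

theorem sufFrom_eq_substr_append {T : List α} {q j : ℕ} (hq : 1 ≤ q) (hqj : q ≤ j) :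
    sufFrom T q = substr T q j ++ T.drop j := by
  have h : T.drop j = (T.drop (q - 1)).drop (j - q + 1) := by
    rw [List.drop_drop]; congr 1; omega
  rw [h, substr, sufFrom, List.take_append_drop]

theorem substr_eq_drop {T : List α} {i q j : ℕ} (hi : 1 ≤ i) (hiq : i ≤ q) (hqj : q ≤ j) :
    substr T q j = (substr T i j).drop (q - i) := by
  rw [substr, substr, List.drop_take, List.drop_drop]
  congr 2 <;> omega

/-- Let `T` be a string of length `n`, `1 ≤ i ≤ j ≤ n`, and let `p ∈ [i,j]` be the position of
the lexicographically minimal suffix in `Suf[i,j]`.  Then the minimal suffix of `T[i..j]`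
either equals `T[p..j]`, or it is the shortest nonempty border of `T[p..j]` and its length is
at most `|T[p..j]|/2`. -/
theorem stmt_3 (T : List α) (i j p : ℕ)
    (hi : 1 ≤ i) (hij : i ≤ j) (hj : j ≤ T.length)
    (hp1 : i ≤ p) (hp2 : p ≤ j)
    (hpmin : ∀ q, i ≤ q → q ≤ j → ¬ List.Lex (· < ·) (sufFrom T q) (sufFrom T p)) :
    ∀ s, IsMinSuffix (substr T i j) s →
      s = substr T p j ∨
      ((s ≠ [] ∧ IsBorder (substr T p j) s ∧
          ∀ t, t ≠ [] → IsBorder (substr T p j) t → s.length ≤ t.length) ∧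
        2 * s.length ≤ (substr T p j).length) := by
  intro s hs
  have hlen := length_substr hi hij hj
  refine min_suffix_eq_or_border (Z := T.drop j) ?_ ?_ ?_ hs
  · rw [← List.length_pos_iff, length_substr (hi.trans hp1) hp2 hj]
    omega
  · rw [substr_eq_drop hi hp1 hp2]
    exact List.drop_suffix _ _
  · intro t ht htW
    have ht0 := List.length_pos_iff.2 ht
    have htl := htW.length_le
    -- A nonempty suffix `t` of `T[i..j]` starts at position `j + 1 - |t|`.
    have hq : substr T (j + 1 - t.length) j = t := by
      rw [substr_eq_drop hi (by omega) (by omega), List.suffix_iff_eq_drop.1 htW]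
      congr 1
      rw [← List.suffix_iff_eq_drop.1 htW]
      omega
    have h := hpmin (j + 1 - t.length) (by omega) (by omega)
    rwa [sufFrom_eq_substr_append (j := j) (by omega) (by omega),
      sufFrom_eq_substr_append (j := j) (hi.trans hp1) hp2, hq] at h
end

section
/- Let ρ be a primitive string, ρ' a proper (possibly empty) prefix of ρ, s ≥ 2 an integer, and set P_2 = ρ^s ρ'. Let w be a string such that P_2 is both a prefix and a suffix of w and |w| + |ρ| ≤ 2|P_2|. Then w = ρ^t ρ' for some integer t ≥ s. -/
/-!
Write `P = ρ^s ρ'` and `w = u P`. The length hypothesis says `|u| + |ρ| ≤ |P|`, and `P` starts with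
`ρ`, so `u ρ` is a prefix of `P` (both are prefixes of `w`) and hence of `ρ^(s+1)`. An occurrence
of a primitive word `ρ` inside a power of `ρ` must start at a multiple of `|ρ|`
(`eq_lrep_of_append_prefix`): otherwise `ρ = a b = b a` with `a`, `b` nonempty, and commuting words
are powers of a common word (`exists_lrep_of_comm`), contradicting primitivity. Therefore
`u = ρ^q`, and `w = ρ^(q+s) ρ'`.
-/

variable {α : Type*} [LinearOrder α]

/-- `lrep w a` is `w^a`, the concatenation of `a` copies of `w`. -/
def lrep (w : List α) (a : ℕ) : List α := (List.replicate a w).flatten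

/-- `ρ` is primitive: it cannot be written as `x^k` for a string `x` and an integer `k ≥ 2`. -/
def IsPrimitive (ρ : List α) : Prop := ∀ (x : List α) (k : ℕ), 2 ≤ k → ρ ≠ lrep x k

theorem lrep_add (x : List α) (m n : ℕ) : lrep x (m + n) = lrep x m ++ lrep x n := by
  rw [lrep, List.replicate_add, List.flatten_append, ← lrep, ← lrep]

theorem lrep_succ (x : List α) (n : ℕ) : lrep x (n + 1) = x ++ lrep x n := by
  simp [lrep, List.replicate_succ]

/-- Commuting words are powers of a common word. -/
theorem exists_lrep_of_comm (n : ℕ) : ∀ a b : List α, a.length + b.length ≤ n →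
    a ++ b = b ++ a → ∃ x i j, a = lrep x i ∧ b = lrep x j := by
  induction n with
  | zero =>
    intro a b hn _
    have ha : a = [] := List.length_eq_zero_iff.1 (by omega)
    have hb : b = [] := List.length_eq_zero_iff.1 (by omega)
    exact ⟨[], 0, 0, by simp [ha, lrep], by simp [hb, lrep]⟩
  | succ n ih =>
    -- Euclidean step: the shorter word is a prefix of the longer one and can be stripped off.
    have key : ∀ a b : List α, a.length + b.length ≤ n + 1 → a.length ≤ b.length →
        a ++ b = b ++ a → ∃ x i j, a = lrep x i ∧ b = lrep x j := by
      intro a b hn hl h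
      rcases eq_or_ne a [] with rfl | ha
      · exact ⟨b, 0, 1, by simp [lrep], by simp [lrep]⟩
      · have hp : a <+: b := List.prefix_of_prefix_length_le
          (h ▸ List.prefix_append a b) (List.prefix_append b a) hl
        obtain ⟨c, rfl⟩ := hp
        have hpos := List.length_pos_iff.2 ha
        rw [List.length_append] at hn
        obtain ⟨x, i, j, hi, hj⟩ := ih a c (by omega) (by simpa using h)
        exact ⟨x, i, i + j, hi, by rw [lrep_add, ← hi, ← hj]⟩
    intro a b hn h
    rcases le_total a.length b.length with hl | hl
    · exact key a b hn hl h
    · obtain ⟨x, i, j, hi, hj⟩ := key b a (by omega) hl h.symm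
      exact ⟨x, j, i, hj, hi⟩

/-- A primitive word has no factorization into two nonempty commuting words. -/
theorem eq_nil_of_comm {a b : List α} (hprim : IsPrimitive (a ++ b))
    (h : a ++ b = b ++ a) (hb : b ≠ []) : a = [] := by
  obtain ⟨x, i, j, hi, hj⟩ := exists_lrep_of_comm _ a b le_rfl h
  have hj0 : j ≠ 0 := by
    rintro rfl
    exact hb (by simpa [lrep] using hj)
  have hij : ¬ 2 ≤ i + j := fun h2 => hprim x (i + j) h2 (by rw [lrep_add, ← hi, ← hj])
  have hi0 : i = 0 := by omega
  simpa [hi0, lrep] using hi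

/-- A primitive word occurs in its own powers only at multiples of its length. -/
theorem eq_lrep_of_append_prefix {ρ : List α} (hprim : IsPrimitive ρ) (n : ℕ) :
    ∀ u : List α, u ++ ρ <+: lrep ρ n → ∃ q, u = lrep ρ q := by
  induction n with
  | zero =>
    intro u h
    have h0 : u ++ ρ = [] := by simpa [lrep] using h
    exact ⟨0, by simpa [lrep] using (List.append_eq_nil_iff.1 h0).1⟩
  | succ n ih =>
    intro u h
    rw [lrep_succ] at h
    have hu : u <+: ρ ++ lrep ρ n := (List.prefix_append u ρ).trans h
    rcases le_or_gt ρ.length u.length with hl | hl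
    · obtain ⟨u', rfl⟩ := List.prefix_of_prefix_length_le (List.prefix_append _ _) hu hl
      rw [List.append_assoc, List.prefix_append_right_inj] at h
      obtain ⟨q, rfl⟩ := ih u' h
      exact ⟨q + 1, (lrep_succ ρ q).symm⟩
    · obtain ⟨b, rfl⟩ := List.prefix_of_prefix_length_le hu (List.prefix_append _ _) hl.le
      have hb : b ≠ [] := by
        rintro rfl
        simp at hl
      refine ⟨0, ?_⟩
      have hnil : u = [] := by
        cases n with
        | zero =>
          have := h.length_le
          simp [lrep] at this
          exact this
        | succ m =>
          rw [List.append_assoc u b, List.prefix_append_right_inj, lrep_succ] at h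
          -- Both `u b` and `b u` are prefixes of `b (u b)^(m+1)`, and they have equal length.
          have h2 : b ++ u <+: b ++ (u ++ b ++ lrep (u ++ b) m) := by
            rw [List.prefix_append_right_inj, List.append_assoc]
            exact List.prefix_append _ _
          have h3 := List.prefix_of_prefix_length_le h h2 (by simp [add_comm])
          exact eq_nil_of_comm hprim (h3.eq_of_length (by simp [add_comm])) hb
      simpa [lrep] using hnil

/-- Let `ρ` be a primitive string, `ρ'` a proper (possibly empty) prefix of `ρ`, `s ≥ 2`, and
`P₂ = ρ^s ρ'`.  If `P₂` is both a prefix and a suffix of `w` and `|w| + |ρ| ≤ 2|P₂|`, then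
`w = ρ^t ρ'` for some integer `t ≥ s`. -/
theorem stmt_9 (ρ ρ' w : List α) (s : ℕ)
    (hprim : IsPrimitive ρ)
    (hρ'1 : ρ' <+: ρ) (hρ'2 : ρ' ≠ ρ)
    (hs : 2 ≤ s)
    (hpre : (lrep ρ s ++ ρ') <+: w)
    (hsuf : (lrep ρ s ++ ρ') <:+ w)
    (hlen : w.length + ρ.length ≤ 2 * (lrep ρ s ++ ρ').length) :
    ∃ t, s ≤ t ∧ w = lrep ρ t ++ ρ' := by
  obtain ⟨u, rfl⟩ := hsuf
  have hP : lrep ρ s ++ ρ' <+: lrep ρ (s + 1) := by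
    rw [lrep_add, List.prefix_append_right_inj]
    simpa [lrep] using hρ'1
  have hρP : ρ <+: lrep ρ s ++ ρ' := by
    obtain ⟨m, rfl⟩ : ∃ m, s = m + 1 := ⟨s - 1, by omega⟩
    rw [lrep_succ, List.append_assoc]
    exact List.prefix_append _ _
  have huρ : u ++ ρ <+: lrep ρ s ++ ρ' := by
    refine List.prefix_of_prefix_length_le ((List.prefix_append_right_inj u).2 hρP) hpre ?_
    rw [List.length_append] at hlen ⊢
    omega
  obtain ⟨q, rfl⟩ := eq_lrep_of_append_prefix hprim _ u (huρ.trans hP)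
  exact ⟨q + s, by omega, by rw [lrep_add, List.append_assoc]⟩
end
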